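/- arXiv:1507.03046 — 5 statements merged into one kernel-verified Lean document; each statement's English description precedes it below -/
import Mathlib

section
/- Let D and Y be finite totally ordered sets of equal size, let π : D → Y be a bijection, and let 𝒟 = (D_1,…,D_k) and 𝒴 = (Y_1,…,Y_k) be ordered partitions of D and Y such that π(D_j) = Y_j for every j; let π_j : D_j → Y_j denote the restriction of π. Then sgn(π) = sgn(𝒟) · sgn(𝒴) · ∏_{j=1}^{k} sgn(π_j). -/
/-! Call `c a` the index of the block containing `a`. An inversion of `π` has both entries in one
block, and is then an inversion of exactly one `π_j`, or its entries lie in different blocks. Ordering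
the latter pairs so that `c a < c b`, the pair contributes an inversion of `π` exactly when one, but
not both, of `b < a` and `π b < π a` holds. Hence modulo 2 the number of cross-block inversions is
`N(𝒟) + N(𝒴)`, since `N(𝒟)` and `N(𝒴)` count the pairs with `c a < c b` satisfying the first,
respectively the second, of these inequalities (`listInv_eq_card`). -/

open scoped Classical

/-- The number of inversions N(π) of a bijection π : D → Y between finite subsets of
linearly ordered types: #{(a,a') ∈ D² : a < a' and π(a) > π(a')}. -/
noncomputable def invCount {A X : Type*} [Fintype A] [LinearOrder A] [LinearOrder X]
    {D : Finset A} {Y : Finset X} (π : {a // a ∈ D} ≃ {x // x ∈ Y}) : ℕ :=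
  (Finset.univ.filter fun p : {a // a ∈ D} × {a // a ∈ D} =>
    p.1.val < p.2.val ∧ (π p.2).val < (π p.1).val).card

/-- The number of inversions of the restriction π_j of π to a subset S ⊆ D:
#{(a,a') ∈ S² : a < a' and π(a) > π(a')}. -/
noncomputable def invCountOn {A X : Type*} [Fintype A] [LinearOrder A] [LinearOrder X]
    {D : Finset A} {Y : Finset X} (π : {a // a ∈ D} ≃ {x // x ∈ Y}) (S : Finset A) : ℕ :=
  (Finset.univ.filter fun p : {a // a ∈ D} × {a // a ∈ D} =>
    p.1.val ∈ S ∧ p.2.val ∈ S ∧ p.1.val < p.2.val ∧ (π p.2).val < (π p.1).val).card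

/-- Number of "crossing" pairs between two finsets: #{(y,y') ∈ Y₁ × Y₂ : y > y'}. -/
def crossInv {β : Type*} [LinearOrder β] (Y₁ Y₂ : Finset β) : ℕ :=
  ((Y₁ ×ˢ Y₂).filter fun q => q.2 < q.1).card

/-- N(𝒴) for an ordered partition given as a list (Y_1,…,Y_k):
#{(y_i,y_j) : y_i ∈ Y_i, y_j ∈ Y_j, i < j, y_i > y_j}.  sgn(𝒴) = (−1)^{listInv 𝒴}. -/
def listInv {β : Type*} [LinearOrder β] : List (Finset β) → ℕ
  | [] => 0
  | Z :: L => (L.map (crossInv Z)).sum + listInv L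

lemma listInv_finRange {β : Type*} [LinearOrder β] (k : ℕ) (f : Fin k → Finset β) :
    listInv ((List.finRange k).map f) =
      ∑ i, ∑ j, if i < j then crossInv (f i) (f j) else 0 := by
  induction k with
  | zero => simp [listInv]
  | succ k ih =>
    have h := ih (fun i => f i.succ)
    have e : ((List.finRange k).map Fin.succ).map f =
        (List.finRange k).map (fun i => f i.succ) := by
      simp [Function.comp_def]
    rw [List.finRange_succ, List.map_cons, e, listInv, h, Fin.sum_univ_succ]
    simp [Fin.sum_univ_succ, Function.comp_def, ← List.ofFn_eq_map, List.sum_ofFn]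

/-- If the blocks `f i` are the images under an injection `u` of the fibres of a colouring `c`, then
`N(f)` counts pairs in the common index type `α`. With `u` the inclusion of `D`, respectively `π`
followed by the inclusion of `Y`, both partition signs become counts over pairs in `D`. -/
lemma listInv_eq_card {α β : Type*} [Fintype α] [LinearOrder β] {k : ℕ} (f : Fin k → Finset β)
    (u : α → β) (hu : Function.Injective u) (c : α → Fin k)
    (hf : ∀ i x, x ∈ f i ↔ ∃ a, c a = i ∧ u a = x) :
    listInv ((List.finRange k).map f) =
      (Finset.univ.filter fun p : α × α => c p.1 < c p.2 ∧ u p.2 < u p.1).card := by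
  have key : ∀ i j, crossInv (f i) (f j) = (Finset.univ.filter fun p : α × α =>
      c p.1 = i ∧ c p.2 = j ∧ u p.2 < u p.1).card := by
    intro i j
    rw [crossInv, ← Finset.card_image_of_injective _ (hu.prodMap hu)]
    congr 1
    ext ⟨x, y⟩
    simp only [Finset.mem_filter, Finset.mem_product, hf, Finset.mem_image, Finset.mem_univ,
      true_and, Prod.exists, Prod.map_apply, Prod.mk.injEq]
    constructor
    · rintro ⟨⟨⟨a, ha, rfl⟩, ⟨b, hb, rfl⟩⟩, h⟩
      exact ⟨a, b, ⟨ha, hb, h⟩, rfl, rfl⟩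
    · rintro ⟨a, b, ⟨ha, hb, h⟩, rfl, rfl⟩
      exact ⟨⟨⟨a, ha, rfl⟩, ⟨b, hb, rfl⟩⟩, h⟩
  rw [listInv_finRange, ← Finset.sum_product',
    Finset.card_eq_sum_card_fiberwise (f := fun p : α × α => (c p.1, c p.2))
      (t := Finset.univ ×ˢ Finset.univ) (fun _ _ => by simp)]
  refine Finset.sum_congr rfl ?_
  rintro ⟨i, j⟩ -
  rw [key, Finset.filter_filter]
  split_ifs with h
  · congr 1
    ext p
    simp only [Finset.mem_filter, Finset.mem_univ, true_and, Prod.mk.injEq]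
    grind
  · symm
    rw [Finset.card_eq_zero, Finset.filter_eq_empty_iff]
    simp only [Finset.mem_univ, Prod.mk.injEq, forall_const]
    grind

/-- The parity statement behind the sign formula, for two injections `u`, `v` of `α` into linear
orders and a colouring `c`. Here `m` can be taken to be the number of pairs with `c p.1 < c p.2`
whose order is reversed by both `u` and `v`. -/
lemma exists_card_inversions_add {α β γ : Type*} [Fintype α] [LinearOrder β] [LinearOrder γ]
    {k : ℕ} (u : α → β) (hu : Function.Injective u) (v : α → γ) (hv : Function.Injective v)
    (c : α → Fin k) :
    ∃ m : ℕ,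
      (Finset.univ.filter fun p : α × α => u p.1 < u p.2 ∧ v p.2 < v p.1).card + 2 * m =
      (Finset.univ.filter fun p : α × α => c p.1 < c p.2 ∧ u p.2 < u p.1).card +
      (Finset.univ.filter fun p : α × α => c p.1 < c p.2 ∧ v p.2 < v p.1).card +
      ∑ j, (Finset.univ.filter fun p : α × α =>
        c p.1 = j ∧ c p.2 = j ∧ u p.1 < u p.2 ∧ v p.2 < v p.1).card := by
  refine ⟨(Finset.univ.filter fun p : α × α =>
    c p.1 < c p.2 ∧ u p.2 < u p.1 ∧ v p.2 < v p.1).card, ?_⟩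
  have hsame : ∑ j, (Finset.univ.filter fun p : α × α =>
        c p.1 = j ∧ c p.2 = j ∧ u p.1 < u p.2 ∧ v p.2 < v p.1).card =
      (Finset.univ.filter fun p : α × α =>
        c p.1 = c p.2 ∧ u p.1 < u p.2 ∧ v p.2 < v p.1).card := by
    rw [Finset.card_eq_sum_card_fiberwise (f := fun p : α × α => c p.1)
      (t := Finset.univ) (fun _ _ => by simp)]
    refine Finset.sum_congr rfl fun j _ => ?_
    rw [Finset.filter_filter]
    congr 1
    ext p
    simp only [Finset.mem_filter, Finset.mem_univ, true_and]
    grind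
  -- Swapping the entries puts the smaller colour first.
  have hswap : (Finset.univ.filter fun p : α × α =>
        c p.2 < c p.1 ∧ u p.1 < u p.2 ∧ v p.2 < v p.1).card =
      (Finset.univ.filter fun p : α × α =>
        c p.1 < c p.2 ∧ u p.2 < u p.1 ∧ v p.1 < v p.2).card :=
    Finset.card_equiv (Equiv.prodComm α α) (by simp)
  rw [hsame]
  simp only [Finset.card_filter] at hswap ⊢
  have h1 : (∑ p : α × α, if u p.1 < u p.2 ∧ v p.2 < v p.1 then 1 else 0) =
      (∑ p : α × α, if c p.1 = c p.2 ∧ u p.1 < u p.2 ∧ v p.2 < v p.1 then 1 else 0) +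
      (∑ p : α × α, if c p.1 < c p.2 ∧ u p.1 < u p.2 ∧ v p.2 < v p.1 then 1 else 0) +
      (∑ p : α × α, if c p.2 < c p.1 ∧ u p.1 < u p.2 ∧ v p.2 < v p.1 then 1 else 0) := by
    simp only [← Finset.sum_add_distrib]
    refine Finset.sum_congr rfl fun p _ => ?_
    rcases lt_trichotomy (c p.1) (c p.2) with h | h | h
    · simp [h, h.ne, h.not_gt]
    · simp [h]
    · simp [h, h.ne', h.not_gt]
  have h2 : (∑ p : α × α, if c p.1 < c p.2 ∧ u p.2 < u p.1 then 1 else 0) =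
      (∑ p : α × α, if c p.1 < c p.2 ∧ u p.2 < u p.1 ∧ v p.2 < v p.1 then 1 else 0) +
      (∑ p : α × α, if c p.1 < c p.2 ∧ u p.2 < u p.1 ∧ v p.1 < v p.2 then 1 else 0) := by
    simp only [← Finset.sum_add_distrib]
    refine Finset.sum_congr rfl fun p _ => ?_
    rcases lt_trichotomy (v p.1) (v p.2) with h | h | h
    · simp [h, h.not_gt]
    · simp [hv h]
    · simp [h, h.not_gt]
  have h3 : (∑ p : α × α, if c p.1 < c p.2 ∧ v p.2 < v p.1 then 1 else 0) =
      (∑ p : α × α, if c p.1 < c p.2 ∧ u p.2 < u p.1 ∧ v p.2 < v p.1 then 1 else 0) +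
      (∑ p : α × α, if c p.1 < c p.2 ∧ u p.1 < u p.2 ∧ v p.2 < v p.1 then 1 else 0) := by
    simp only [← Finset.sum_add_distrib]
    refine Finset.sum_congr rfl fun p _ => ?_
    rcases lt_trichotomy (u p.1) (u p.2) with h | h | h
    · simp [h, h.not_gt]
    · simp [hu h]
    · simp [h, h.not_gt]
  omega

/-- if π : D → Y is a bijection compatible with ordered partitions
𝒟 = (D_1,…,D_k) of D and 𝒴 = (Y_1,…,Y_k) of Y (i.e. π(D_j) = Y_j), then
sgn(π) = sgn(𝒟) · sgn(𝒴) · ∏_j sgn(π_j), where π_j is the restriction of π to D_j. -/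
theorem sgn_of_partitioned_bijection {A X : Type*}
    [Fintype A] [LinearOrder A] [Fintype X] [LinearOrder X]
    (D : Finset A) (Y : Finset X) (π : {a // a ∈ D} ≃ {x // x ∈ Y})
    (k : ℕ) (Ds : Fin k → Finset A) (Ys : Fin k → Finset X)
    (hDdisj : ∀ i j, i ≠ j → Disjoint (Ds i) (Ds j))
    (hDunion : Finset.univ.biUnion Ds = D)
    (hYdisj : ∀ i j, i ≠ j → Disjoint (Ys i) (Ys j))
    (hYunion : Finset.univ.biUnion Ys = Y)
    (hmap : ∀ (j : Fin k) (a : {a // a ∈ D}), a.val ∈ Ds j ↔ (π a).val ∈ Ys j) :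
    ((-1 : ℤ) ^ invCount π) =
      (-1 : ℤ) ^ listInv ((List.finRange k).map Ds) *
        (-1 : ℤ) ^ listInv ((List.finRange k).map Ys) *
        ∏ j : Fin k, (-1 : ℤ) ^ invCountOn π (Ds j) := by
  have hex : ∀ a : {a // a ∈ D}, ∃ j, a.val ∈ Ds j := fun a => by
    simpa using (Finset.ext_iff.1 hDunion a.val).2 a.2
  choose c hc using hex
  have hcD : ∀ a j, a.val ∈ Ds j ↔ c a = j := fun a j =>
    ⟨fun h => by
      by_contra hne
      exact Finset.disjoint_left.1 (hDdisj _ _ hne) (hc a) h, fun h => h ▸ hc a⟩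
  have hu : Function.Injective (fun a : {a // a ∈ D} => a.val) := Subtype.val_injective
  have hv : Function.Injective (fun a : {a // a ∈ D} => (π a).val) :=
    Subtype.val_injective.comp π.injective
  have hD := listInv_eq_card Ds _ hu c (fun i x => by
    constructor
    · intro hx
      have hxD : x ∈ D := hDunion ▸ Finset.mem_biUnion.2 ⟨i, Finset.mem_univ _, hx⟩
      exact ⟨⟨x, hxD⟩, (hcD _ _).1 hx, rfl⟩
    · rintro ⟨a, ha, rfl⟩
      exact (hcD _ _).2 ha)
  have hY := listInv_eq_card Ys _ hv c (fun i x => by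
    constructor
    · intro hx
      have hxY : x ∈ Y := hYunion ▸ Finset.mem_biUnion.2 ⟨i, Finset.mem_univ _, hx⟩
      refine ⟨π.symm ⟨x, hxY⟩, (hcD _ _).1 ((hmap _ _).2 ?_), ?_⟩ <;> simp [hx]
    · rintro ⟨a, ha, rfl⟩
      exact (hmap _ _).1 ((hcD _ _).2 ha))
  have hon : ∀ j, invCountOn π (Ds j) = (Finset.univ.filter
      fun p : {a // a ∈ D} × {a // a ∈ D} => c p.1 = j ∧ c p.2 = j ∧ p.1.val < p.2.val ∧
        (π p.2).val < (π p.1).val).card := fun j => by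
    simp only [invCountOn, hcD]
  obtain ⟨m, hm⟩ := exists_card_inversions_add _ hu _ hv c
  rw [← hD, ← hY, ← Finset.sum_congr rfl (fun j _ => hon j)] at hm
  rw [Finset.prod_pow_eq_pow_sum, ← pow_add, ← pow_add, ← hm, pow_add, pow_mul]
  simp [invCount]
end

section
/- Let M be a matrix over a commutative ring with rows indexed by a finite set A and columns by a finite set X, and fix subsets A' ⊆ A and X' ⊆ X. For D ⊆ A and Y ⊆ X with |D| = |Y|, let perm*(D,Y) := Σ_π ∏_{a∈D} M_{a,π(a)}, the sum over all bijections π : D → Y such that no a ∈ D satisfies both a ∈ A' and π(a) ∈ X'. Then perm*(D,Y) = Σ_{D' ⊆ D∩A', Y' ⊆ Y∩X'} (−1)^{|D'|} · perm(D',Y') · perm(D \ D', Y \ Y'). -/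
/-!
Fix a bijection `π : D → Y` and let `B` be the set of its violating positions, those `a ∈ A'`
with `π a ∈ X'`. The indicator of `B = ∅` is the alternating sum of `(-1)^|S|` over `S ⊆ B`
(`sum_sign_indicator`), and `S ⊆ B` says that `S ⊆ D ∩ A'` and `π` maps `S` onto a (unique) set
`T ⊆ Y ∩ X'` (`sum_image_indicator`). After exchanging the sums, the bijections `π` mapping `S`
onto `T` contribute `pperm M S T * pperm M (D \ S) (Y \ T)`, since they are the pairs of
bijections `S → T` and `D \ S → Y \ T` (`pperm_mul_pperm`).
-/

open scoped Classical

/-- The partial permanent perm(D,Y): the sum over all bijections π : D → Y of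
∏_{a ∈ D} M_{a,π(a)}; 0 when |D| ≠ |Y| and 1 when D = Y = ∅. -/
noncomputable def pperm {R A X : Type*} [CommRing R] [Fintype A] [Fintype X]
    (M : A → X → R) (D : Finset A) (Y : Finset X) : R :=
  ∑ π : {a // a ∈ D} ≃ {x // x ∈ Y}, ∏ a : {a // a ∈ D}, M a.val (π a).val

/-- The restricted partial permanent perm*(D,Y) relative to A' ⊆ A, X' ⊆ X:
the sum over all bijections π : D → Y such that no a ∈ D has both a ∈ A' and π(a) ∈ X'. -/
noncomputable def ppermStar {R A X : Type*} [CommRing R] [Fintype A] [Fintype X]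
    (M : A → X → R) (A' : Finset A) (X' : Finset X) (D : Finset A) (Y : Finset X) : R :=
  ∑ π : {a // a ∈ D} ≃ {x // x ∈ Y},
    if ∀ a : {a // a ∈ D}, ¬(a.val ∈ A' ∧ (π a).val ∈ X') then
      ∏ a : {a // a ∈ D}, M a.val (π a).val
    else 0

/-- Gluing of finite sets: a set `D` that is the disjoint union of `S` and `E` is, as a type,
the sum of the types `S` and `E`. -/
noncomputable def glueEquiv {A : Type*} {D S E : Finset A}
    (hD : ∀ a, a ∈ D ↔ a ∈ S ∨ a ∈ E) (hdisj : ∀ a, a ∈ S → a ∉ E) :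
    {a // a ∈ S} ⊕ {a // a ∈ E} ≃ {a // a ∈ D} :=
  Equiv.ofBijective
    (Sum.elim (fun a => ⟨a.1, (hD a.1).2 (Or.inl a.2)⟩) (fun a => ⟨a.1, (hD a.1).2 (Or.inr a.2)⟩))
    (by
      constructor
      · rintro (⟨a, ha⟩ | ⟨a, ha⟩) (⟨b, hb⟩ | ⟨b, hb⟩) h <;> simp at h <;> grind
      · rintro ⟨a, ha⟩
        rcases (hD a).1 ha with h | h
        · exact ⟨Sum.inl ⟨a, h⟩, rfl⟩
        · exact ⟨Sum.inr ⟨a, h⟩, rfl⟩)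

@[simp] lemma glueEquiv_inl {A : Type*} {D S E : Finset A}
    (hD : ∀ a, a ∈ D ↔ a ∈ S ∨ a ∈ E) (hdisj : ∀ a, a ∈ S → a ∉ E) (a : {a // a ∈ S}) :
    (glueEquiv hD hdisj (Sum.inl a)).val = a.val := rfl

@[simp] lemma glueEquiv_inr {A : Type*} {D S E : Finset A}
    (hD : ∀ a, a ∈ D ↔ a ∈ S ∨ a ∈ E) (hdisj : ∀ a, a ∈ S → a ∉ E) (a : {a // a ∈ E}) :
    (glueEquiv hD hdisj (Sum.inr a)).val = a.val := rfl

/-- A bijection `D → Y` whose membership predicates for `S ⊆ D` and `T ⊆ Y` correspond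
restricts to a bijection `S → T`. -/
def restrictEquiv {A X : Type*} {D S : Finset A} {Y T : Finset X}
    (hS : ∀ a ∈ S, a ∈ D) (hT : ∀ x ∈ T, x ∈ Y) (π : {a // a ∈ D} ≃ {x // x ∈ Y})
    (h : ∀ a, a.val ∈ S ↔ (π a).val ∈ T) : {a // a ∈ S} ≃ {x // x ∈ T} where
  toFun a := ⟨(π ⟨a.1, hS a.1 a.2⟩).1, (h _).1 a.2⟩
  invFun x := ⟨(π.symm ⟨x.1, hT x.1 x.2⟩).1, (h _).2 (by simp)⟩
  left_inv a := by simp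
  right_inv x := by simp

/-- A bijection `D → Y` carrying `S` onto `T` is the same as a pair of bijections
`S → T` and `D \ S → Y \ T`, so the product of two partial permanents is the part of
`pperm M D Y` coming from such bijections. The complements are named `E` and `F`. -/
lemma pperm_mul_pperm {R A X : Type*} [CommRing R] [Fintype A] [Fintype X] (M : A → X → R)
    {D S E : Finset A} {Y T F : Finset X}
    (hD : ∀ a, a ∈ D ↔ a ∈ S ∨ a ∈ E) (hDd : ∀ a, a ∈ S → a ∉ E)
    (hY : ∀ x, x ∈ Y ↔ x ∈ T ∨ x ∈ F) (hYd : ∀ x, x ∈ T → x ∉ F) :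
    pperm M S T * pperm M E F =
      ∑ π : {a // a ∈ D} ≃ {x // x ∈ Y},
        if ∀ a : {a // a ∈ D}, a.val ∈ S ↔ (π a).val ∈ T then
          ∏ a : {a // a ∈ D}, M a.val (π a).val else 0 := by
  rw [pperm, pperm, Finset.sum_mul_sum, ← Finset.sum_product', ← Finset.sum_filter]
  refine Finset.sum_bij
    (fun p _ => ((glueEquiv hD hDd).symm.trans (Equiv.sumCongr p.1 p.2)).trans
      (glueEquiv hY hYd)) ?_ ?_ ?_ ?_
  · rintro ⟨σ, τ⟩ -
    simp only [Finset.mem_filter, Finset.mem_univ, true_and]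
    intro a
    obtain ⟨b, rfl⟩ := (glueEquiv hD hDd).surjective a
    rcases b with b | b
    · simp
    · have h1 : b.val ∉ S := fun h => hDd _ h b.2
      have h2 : (τ b).val ∉ T := fun h => hYd _ h (τ b).2
      simp [h1, h2]
  · rintro ⟨σ, τ⟩ - ⟨σ', τ'⟩ - h
    have key : ∀ b, Equiv.sumCongr σ τ b = Equiv.sumCongr σ' τ' b := by
      intro b
      have := congrArg (fun e => e (glueEquiv hD hDd b)) h
      simpa using this
    refine Prod.ext (Equiv.ext fun a => ?_) (Equiv.ext fun a => ?_)
    · simpa using key (Sum.inl a)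
    · simpa using key (Sum.inr a)
  · intro π hπ
    simp only [Finset.mem_filter, Finset.mem_univ, true_and] at hπ
    have hπ' : ∀ a : {a // a ∈ D}, a.val ∈ E ↔ (π a).val ∈ F := by
      intro a
      have h1 := hπ a
      have h2 := (hD a).1 a.2
      have h3 := (hY (π a)).1 (π a).2
      have h4 := hDd a
      have h5 := hYd (π a)
      tauto
    refine ⟨(restrictEquiv (fun a h => (hD a).2 (Or.inl h)) (fun x h => (hY x).2 (Or.inl h)) π hπ,
      restrictEquiv (fun a h => (hD a).2 (Or.inr h)) (fun x h => (hY x).2 (Or.inr h)) π hπ'),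
      by simp, ?_⟩
    ext a
    obtain ⟨b, rfl⟩ := (glueEquiv hD hDd).surjective a
    rcases b with b | b <;> simp [restrictEquiv] <;> rfl
  · rintro ⟨σ, τ⟩ -
    rw [← Equiv.prod_comp (glueEquiv hD hDd), Fintype.prod_sum_type]
    simp

/-- Among the `T ⊆ Y ∩ X'`, only `T = π(S ∩ D)` can correspond to `S` under `π`, and it is
available exactly when `π(S ∩ D) ⊆ X'`. -/
lemma sum_image_indicator {R A X : Type*} [CommRing R]
    {D S : Finset A} {Y X' : Finset X}
    (π : {a // a ∈ D} ≃ {x // x ∈ Y}) (c : R) :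
    (∑ T ∈ (Y ∩ X').powerset,
      if ∀ a : {a // a ∈ D}, a.val ∈ S ↔ (π a).val ∈ T then c else 0) =
      if ∀ a : {a // a ∈ D}, a.val ∈ S → (π a).val ∈ X' then c else 0 := by
  have huniq : ∀ T ⊆ Y, (∀ a : {a // a ∈ D}, a.val ∈ S ↔ (π a).val ∈ T) ↔
      T = (Finset.univ.filter fun a : {a // a ∈ D} => a.val ∈ S).image fun a => (π a).val := by
    intro T hT
    constructor
    · intro h
      ext x
      simp only [Finset.mem_image, Finset.mem_filter, Finset.mem_univ, true_and]
      constructor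
      · intro hx
        exact ⟨π.symm ⟨x, hT hx⟩, (h _).2 (by simpa using hx), by simp⟩
      · rintro ⟨a, ha, rfl⟩
        exact (h a).1 ha
    · rintro rfl a
      simp only [Finset.mem_image, Finset.mem_filter, Finset.mem_univ, true_and]
      constructor
      · intro ha
        exact ⟨a, ha, rfl⟩
      · rintro ⟨b, hb, hab⟩
        rwa [← π.injective (Subtype.ext hab)]
  rw [Finset.sum_congr rfl (fun T hT => if_congr (huniq T
    ((Finset.mem_powerset.1 hT).trans Finset.inter_subset_left)) rfl rfl), Finset.sum_ite_eq']
  refine if_congr ?_ rfl rfl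
  rw [Finset.mem_powerset]
  constructor
  · intro h a ha
    exact (Finset.mem_inter.1 (h (Finset.mem_image.2 ⟨a, by simpa using ha, rfl⟩))).2
  · intro h x hx
    obtain ⟨a, ha, rfl⟩ := Finset.mem_image.1 hx
    exact Finset.mem_inter.2 ⟨(π a).2, h a (by simpa using ha)⟩

/-- The alternating sum over all sets `S` of positions violating the restriction is the
indicator that `π` has no violating position. -/
lemma sum_sign_indicator {R A X : Type*} [CommRing R]
    {D A' : Finset A} {Y X' : Finset X}
    (π : {a // a ∈ D} ≃ {x // x ∈ Y}) (c : R) :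
    (∑ S ∈ (D ∩ A').powerset, (-1 : R) ^ S.card *
      if ∀ a : {a // a ∈ D}, a.val ∈ S → (π a).val ∈ X' then c else 0) =
      if ∀ a : {a // a ∈ D}, ¬(a.val ∈ A' ∧ (π a).val ∈ X') then c else 0 := by
  -- `B` is the set of violating positions; the nonzero terms are those with `S ⊆ B`.
  set B : Finset A := (Finset.univ.filter fun a : {a // a ∈ D} =>
    a.val ∈ A' ∧ (π a).val ∈ X').image Subtype.val with hB
  have hmem : ∀ a : {a // a ∈ D}, a.val ∈ B ↔ (a.val ∈ A' ∧ (π a).val ∈ X') := by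
    intro a
    simp [hB]
  have hBD : ∀ x ∈ B, x ∈ D := by
    intro x hx
    obtain ⟨a, -, rfl⟩ := Finset.mem_image.1 hx
    exact a.2
  have hfil : (D ∩ A').powerset.filter
      (fun S => ∀ a : {a // a ∈ D}, a.val ∈ S → (π a).val ∈ X') = B.powerset := by
    ext S
    simp only [Finset.mem_filter, Finset.mem_powerset]
    constructor
    · rintro ⟨h1, h2⟩ x hx
      have h3 := Finset.mem_inter.1 (h1 hx)
      exact (hmem ⟨x, h3.1⟩).2 ⟨h3.2, h2 ⟨x, h3.1⟩ hx⟩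
    · intro h
      refine ⟨fun x hx => Finset.mem_inter.2 ⟨hBD x (h hx), ?_⟩, fun a ha => ?_⟩
      · exact ((hmem ⟨x, hBD x (h hx)⟩).1 (h hx)).1
      · exact ((hmem a).1 (h ha)).2
  have hsum : (∑ S ∈ B.powerset, (-1 : R) ^ S.card) = if B = ∅ then 1 else 0 := by
    have := congrArg (Int.cast : ℤ → R) (Finset.sum_powerset_neg_one_pow_card (x := B))
    push_cast at this
    simpa using this
  have hiff : B = ∅ ↔ ∀ a : {a // a ∈ D}, ¬(a.val ∈ A' ∧ (π a).val ∈ X') := by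
    rw [Finset.eq_empty_iff_forall_notMem]
    constructor
    · intro h a ha
      exact h a.1 ((hmem a).2 ha)
    · intro h x hx
      exact h ⟨x, hBD x hx⟩ ((hmem ⟨x, hBD x hx⟩).1 hx)
  simp only [mul_ite, mul_zero]
  rw [← Finset.sum_filter, hfil, ← Finset.sum_mul, hsum, if_congr hiff rfl rfl]
  simp

/-- The expansion with all decidability instances taken to be the classical ones, as they are
inside `pperm` and `ppermStar`. -/
lemma ppermStar_eq_sum {R A X : Type*} [CommRing R] [Fintype A] [Fintype X]
    (M : A → X → R) (A' : Finset A) (X' : Finset X) (D : Finset A) (Y : Finset X) :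
    ppermStar M A' X' D Y =
      ∑ D' ∈ (D ∩ A').powerset, ∑ Y' ∈ (Y ∩ X').powerset,
        (-1 : R) ^ D'.card * pperm M D' Y' * pperm M (D \ D') (Y \ Y') := by
  have hterm : ∀ S ∈ (D ∩ A').powerset, ∀ T ∈ (Y ∩ X').powerset,
      (-1 : R) ^ S.card * pperm M S T * pperm M (D \ S) (Y \ T) =
        ∑ π : {a // a ∈ D} ≃ {x // x ∈ Y}, (-1 : R) ^ S.card *
          if ∀ a : {a // a ∈ D}, a.val ∈ S ↔ (π a).val ∈ T then
            ∏ a : {a // a ∈ D}, M a.val (π a).val else 0 := by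
    intro S hS T hT
    have hS' : ∀ a ∈ S, a ∈ D := fun a ha =>
      (Finset.mem_inter.1 (Finset.mem_powerset.1 hS ha)).1
    have hT' : ∀ x ∈ T, x ∈ Y := fun x hx =>
      (Finset.mem_inter.1 (Finset.mem_powerset.1 hT hx)).1
    rw [mul_assoc, pperm_mul_pperm M (D := D) (Y := Y), Finset.mul_sum]
    · intro a
      have := hS' a
      rw [Finset.mem_sdiff]
      tauto
    · intro a ha h
      exact (Finset.mem_sdiff.1 h).2 ha
    · intro x
      have := hT' x
      rw [Finset.mem_sdiff]
      tauto
    · intro x hx h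
      exact (Finset.mem_sdiff.1 h).2 hx
  rw [Finset.sum_congr rfl fun S hS => Finset.sum_congr rfl (hterm S hS),
    Finset.sum_congr rfl fun S _ => Finset.sum_comm, Finset.sum_comm, ppermStar]
  refine Finset.sum_congr rfl fun π _ => ?_
  rw [← sum_sign_indicator π]
  refine Finset.sum_congr rfl fun S _ => ?_
  rw [← Finset.mul_sum, sum_image_indicator π]

/-- inclusion–exclusion for the restricted partial permanent:
perm*(D,Y) = Σ_{D' ⊆ D∩A', Y' ⊆ Y∩X'} (−1)^{|D'|} · perm(D',Y') · perm(D \ D', Y \ Y'). -/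
theorem ppermStar_inclusion_exclusion {R A X : Type*} [CommRing R]
    [Fintype A] [DecidableEq A] [Fintype X] [DecidableEq X]
    (M : A → X → R) (A' : Finset A) (X' : Finset X)
    (D : Finset A) (Y : Finset X) (hcard : D.card = Y.card) :
    ppermStar M A' X' D Y =
      ∑ D' ∈ (D ∩ A').powerset, ∑ Y' ∈ (Y ∩ X').powerset,
        (-1 : R) ^ D'.card * pperm M D' Y' * pperm M (D \ D') (Y \ Y') := by
  obtain rfl : ‹DecidableEq A› = fun a b => Classical.propDecidable (a = b) :=
    Subsingleton.elim _ _
  obtain rfl : ‹DecidableEq X› = fun a b => Classical.propDecidable (a = b) :=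
    Subsingleton.elim _ _
  exact ppermStar_eq_sum M A' X' D Y
end

section
/- Let m be an n×n matrix over a commutative ring R. Then Σ_{σ,τ} sgn(σ)·sgn(τ)·∏_{a ∈ Fin n} m_{σ(a),τ(a)} = n! · det(m), where the sum ranges over all pairs of permutations σ, τ of Fin n. (This is the mixed discriminant of the constant list of matrices (m,…,m).) -/
/-- the mixed discriminant of the constant list (m,…,m) of an n×n matrix m,
Σ_{σ,τ} sgn(σ)·sgn(τ)·∏_a m_{σ(a),τ(a)}, equals n! · det(m). -/
theorem mixed_discriminant_constant {R : Type*} [CommRing R] {n : ℕ}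
    (m : Matrix (Fin n) (Fin n) R) :
    ∑ σ : Equiv.Perm (Fin n), ∑ τ : Equiv.Perm (Fin n),
      ((Equiv.Perm.sign σ : ℤ) : R) * ((Equiv.Perm.sign τ : ℤ) : R) *
        ∏ a : Fin n, m (σ a) (τ a) = (n.factorial : R) * m.det := by
  -- For fixed `τ`, the sum over `σ` is `sgn τ` times the determinant of `m` with its columns
  -- permuted by `τ`, which is `(sgn τ)² * det m = det m`; there are `n!` choices of `τ`.
  have key : ∀ τ : Equiv.Perm (Fin n), ∑ σ : Equiv.Perm (Fin n),
      ((Equiv.Perm.sign σ : ℤ) : R) * ((Equiv.Perm.sign τ : ℤ) : R) *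
        ∏ a : Fin n, m (σ a) (τ a) = m.det := by
    intro τ
    have hsq : ((Equiv.Perm.sign τ : ℤ) : R) * ((Equiv.Perm.sign τ : ℤ) : R) = 1 := by
      rw [← Int.cast_mul, ← Units.val_mul, Int.units_mul_self, Units.val_one, Int.cast_one]
    calc _ = ((Equiv.Perm.sign τ : ℤ) : R) * (m.submatrix id τ).det := by
          rw [Matrix.det_apply', Finset.mul_sum]
          refine Finset.sum_congr rfl fun σ _ => ?_
          simp only [Matrix.submatrix_apply, id]
          ring
      _ = m.det := by rw [Matrix.det_permute', ← mul_assoc, hsq, one_mul]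
  rw [Finset.sum_comm, Finset.sum_congr rfl fun τ _ => key τ]
  simp [Fintype.card_perm]
end

section
/- Let d be an n×n matrix over a commutative ring R, and for each a ∈ Fin n let M_a be the n×n diagonal matrix with (M_a)_{x,x} = d_{a,x} and (M_a)_{x,y} = 0 for x ≠ y. Then Σ_{σ,τ} sgn(σ)·sgn(τ)·∏_{a ∈ Fin n} (M_a)_{σ(a),τ(a)} = Σ_{σ} ∏_{a ∈ Fin n} d_{a,σ(a)}, where the sums range over permutations of Fin n; i.e., the mixed discriminant of the diagonal matrices (M_1,…,M_n) equals the permanent of the matrix d of concatenated diagonals. -/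
/-- the mixed discriminant of the list of diagonal matrices M_a = diagonal(d_a)
equals the permanent of the matrix d of concatenated diagonals. -/
theorem mixed_discriminant_diagonal {R : Type*} [CommRing R] {n : ℕ}
    (d : Matrix (Fin n) (Fin n) R) :
    ∑ σ : Equiv.Perm (Fin n), ∑ τ : Equiv.Perm (Fin n),
      ((Equiv.Perm.sign σ : ℤ) : R) * ((Equiv.Perm.sign τ : ℤ) : R) *
        ∏ a : Fin n, Matrix.diagonal (d a) (σ a) (τ a)
      = ∑ σ : Equiv.Perm (Fin n), ∏ a : Fin n, d a (σ a) := by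
  refine Finset.sum_congr rfl fun σ _ => ?_
  -- Only `τ = σ` contributes to the inner sum, and there the two signs cancel.
  rw [Finset.sum_eq_single σ]
  · have h : ((Equiv.Perm.sign σ : ℤ) : R) * ((Equiv.Perm.sign σ : ℤ) : R) = 1 := by
      rw [← Int.cast_mul, ← Units.val_mul, Int.units_mul_self, Units.val_one, Int.cast_one]
    simp only [h, one_mul, Matrix.diagonal_apply_eq]
  · intro τ _ hτ
    obtain ⟨a, ha⟩ : ∃ a, σ a ≠ τ a := by
      by_contra! h
      exact hτ (Equiv.ext fun a => (h a).symm)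
    exact mul_eq_zero_of_right _
      (Finset.prod_eq_zero (Finset.mem_univ a) (Matrix.diagonal_apply_ne (d a) ha))
  · exact fun h => absurd (Finset.mem_univ σ) h
end

section
/- Let M be an (n+1)×(n+1)×(n+1) array over a commutative ring, indexed by Fin (n+1) in each coordinate. Then Disc(M) = Σ_{x_1,x_2 ∈ Fin (n+1)} (−1)^{x_1+x_2} · M_{0,x_1,x_2} · Disc(M^{(x_1,x_2)}), where M^{(x_1,x_2)} is the n×n×n array defined by M^{(x_1,x_2)}_{a,y_1,y_2} := M_{a+1, succAbove_{x_1}(y_1), succAbove_{x_2}(y_2)} (i.e., the subarray obtained by deleting the first slice in the first coordinate, column x_1 in the second coordinate, and column x_2 in the third coordinate), and x_1+x_2 denotes the sum of the indices as natural numbers. -/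
/-!
A permutation of `Fin (n + 1)` is determined by its value `x` at `0` together with the permutation
`σ` of `Fin n` that it induces on the other indices once the gap at `x` in the target is closed
(`permCons`). Since it is `σ`, extended by fixing `0`, followed by the inverse of the cycle
`Fin.cycleRange x`, its sign is `(-1) ^ x * sign σ`. Splitting both permutation sums of the mixed
discriminant this way (`sum_sign_mul_perm_succ`) and pulling the factor at index `0` out of the
product gives the expansion.
-/

/-- The mixed discriminant Disc(M) of an m×m×m array M over a commutative ring:
Σ_{π¹,π²} sgn(π¹)·sgn(π²)·∏_a M_{a,π¹(a),π²(a)}. -/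
def disc3 {R : Type*} [CommRing R] {m : ℕ} (M : Fin m → Fin m → Fin m → R) : R :=
  ∑ σ : Equiv.Perm (Fin m), ∑ τ : Equiv.Perm (Fin m),
    ((Equiv.Perm.sign σ : ℤ) : R) * ((Equiv.Perm.sign τ : ℤ) : R) *
      ∏ a : Fin m, M a (σ a) (τ a)

/-- The permutation of `Fin (n + 1)` with one-line notation `x, x.succAbove (σ 0), …`: it sends
`0` to `x` and acts on the remaining indices as `σ`, followed by the embedding skipping `x`. -/
def permCons {n : ℕ} (x : Fin (n + 1)) (σ : Equiv.Perm (Fin n)) : Equiv.Perm (Fin (n + 1)) :=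
  x.cycleRange⁻¹ * Equiv.Perm.decomposeFin.symm (0, σ)

theorem permCons_zero {n : ℕ} (x : Fin (n + 1)) (σ : Equiv.Perm (Fin n)) :
    permCons x σ 0 = x := by
  simp [permCons, Equiv.Perm.inv_def]

theorem permCons_succ {n : ℕ} (x : Fin (n + 1)) (σ : Equiv.Perm (Fin n)) (a : Fin n) :
    permCons x σ a.succ = x.succAbove (σ a) := by
  simp [permCons, Equiv.Perm.inv_def]

theorem sign_permCons {n : ℕ} (x : Fin (n + 1)) (σ : Equiv.Perm (Fin n)) :
    Equiv.Perm.sign (permCons x σ) = (-1) ^ (x : ℕ) * Equiv.Perm.sign σ := by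
  simp [permCons, Equiv.Perm.decomposeFin.symm_sign, Fin.sign_cycleRange]

/-- Injectivity is read off from the values; surjectivity follows since both sides have
`(n + 1)!` elements. -/
theorem permCons_bijective (n : ℕ) :
    Function.Bijective (fun p : Fin (n + 1) × Equiv.Perm (Fin n) => permCons p.1 p.2) := by
  rw [Fintype.bijective_iff_injective_and_card]
  refine ⟨?_, (Fintype.card_congr Equiv.Perm.decomposeFin).symm⟩
  rintro ⟨x, σ⟩ ⟨y, τ⟩ h
  have h' : permCons x σ = permCons y τ := h
  obtain rfl : x = y := by
    simpa only [permCons_zero] using DFunLike.congr_fun h' 0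
  congr 1
  ext1 a
  have ha := DFunLike.congr_fun h' a.succ
  rw [permCons_succ, permCons_succ] at ha
  exact Fin.succAbove_right_injective ha

/-- Expansion of an arbitrary signed sum over permutations by the value at `0`. No product
structure of `F` is needed, so it can be applied to `π¹` and `π²` separately. -/
theorem sum_sign_mul_perm_succ {R : Type*} [CommRing R] {n : ℕ}
    (F : Equiv.Perm (Fin (n + 1)) → R) :
    ∑ σ : Equiv.Perm (Fin (n + 1)), ((Equiv.Perm.sign σ : ℤ) : R) * F σ =
      ∑ x : Fin (n + 1), ∑ σ : Equiv.Perm (Fin n),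
        (-1 : R) ^ (x : ℕ) * ((Equiv.Perm.sign σ : ℤ) : R) * F (permCons x σ) := by
  rw [← Fintype.sum_prod_type',
    ← (permCons_bijective n).sum_comp fun σ => ((Equiv.Perm.sign σ : ℤ) : R) * F σ]
  refine Finset.sum_congr rfl fun p _ => ?_
  simp [sign_permCons]

/-- expansion by minors of the mixed discriminant along the first slice:
Disc(M) = Σ_{x₁,x₂} (−1)^{x₁+x₂} · M_{0,x₁,x₂} · Disc(M^{(x₁,x₂)}). -/
theorem disc3_expansion {R : Type*} [CommRing R] {n : ℕ}
    (M : Fin (n + 1) → Fin (n + 1) → Fin (n + 1) → R) :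
    disc3 M = ∑ x₁ : Fin (n + 1), ∑ x₂ : Fin (n + 1),
      (-1 : R) ^ ((x₁ : ℕ) + (x₂ : ℕ)) * M 0 x₁ x₂ *
        disc3 (fun a y₁ y₂ => M a.succ (x₁.succAbove y₁) (x₂.succAbove y₂)) := by
  unfold disc3
  simp only [mul_assoc, ← Finset.mul_sum]
  rw [sum_sign_mul_perm_succ]
  simp only [sum_sign_mul_perm_succ, Fin.prod_univ_succ, permCons_zero, permCons_succ,
    Finset.mul_sum]
  refine Finset.sum_congr rfl fun x₁ _ => ?_
  rw [Finset.sum_comm]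
  refine Finset.sum_congr rfl fun x₂ _ => Finset.sum_congr rfl fun σ _ =>
    Finset.sum_congr rfl fun τ _ => ?_
  ring
end
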